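/- Let X, Y ⊆ ω. If there exists an embedding of pcas of B^X into K2^Y, then the Turing jump X' is Turing reducible to Y. In particular, for no X does B^X embed into K2^X. -/

import Mathlib

namespace PCAEmb

/-! ### Oracle computability -/

/-- Codes for partial functions computable relative to an oracle. -/
inductive OCode : Type
  | zero : OCode
  | succ : OCode
  | left : OCode
  | right : OCode
  | oracle : OCode
  | pair : OCode → OCode → OCode
  | comp : OCode → OCode → OCode
  | prec : OCode → OCode → OCode
  | rfind' : OCode → OCode

/-- Evaluation of an oracle code, relative to a (partial) oracle `O`. -/
def evalo (O : ℕ →. ℕ) : OCode → ℕ →. ℕ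
  | .zero => pure 0
  | .succ => Nat.succ
  | .left => ↑fun n : ℕ => n.unpair.1
  | .right => ↑fun n : ℕ => n.unpair.2
  | .oracle => O
  | .pair cf cg => fun n => Nat.pair <$> evalo O cf n <*> evalo O cg n
  | .comp cf cg => fun n => evalo O cg n >>= evalo O cf
  | .prec cf cg =>
      Nat.unpaired fun a n =>
        n.rec (evalo O cf a) fun y IH => do
          let i ← IH
          evalo O cg (Nat.pair a (Nat.pair y i))
  | .rfind' cf =>
      Nat.unpaired fun a m =>
        (Nat.rfind fun n => (fun x => x = 0) <$> evalo O cf (Nat.pair a (n + m))).map (· + m)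

/-- The standard numbering of oracle codes. -/
def OCode.ofNat : ℕ → OCode
  | 0 => .zero
  | 1 => .succ
  | 2 => .left
  | 3 => .right
  | 4 => .oracle
  | n + 5 =>
    match n % 4 with
    | 0 => .pair (OCode.ofNat (n / 4).unpair.1) (OCode.ofNat (n / 4).unpair.2)
    | 1 => .comp (OCode.ofNat (n / 4).unpair.1) (OCode.ofNat (n / 4).unpair.2)
    | 2 => .prec (OCode.ofNat (n / 4).unpair.1) (OCode.ofNat (n / 4).unpair.2)
    | _ => .rfind' (OCode.ofNat (n / 4).unpair.1)
  decreasing_by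
    all_goals
      have h1 := Nat.unpair_left_le (n / 4)
      have h2 := Nat.unpair_right_le (n / 4)
      have h3 := Nat.div_le_self n 4
      omega

/-- The `e`-th Turing functional with oracle `O` : `Φ_e^O`. -/
def phi (O : ℕ →. ℕ) (e : ℕ) : ℕ →. ℕ := evalo O (OCode.ofNat e)

/-- The characteristic function of a set of naturals, as a (total) partial function. -/
noncomputable def chi (X : Set ℕ) : ℕ →. ℕ :=
  fun n => Part.some (X.indicator (fun _ => 1) n)

/-- `ψ` is partial computable relative to the oracle `O`. -/
def RecursiveIn (O : ℕ →. ℕ) (ψ : ℕ →. ℕ) : Prop := ∃ c : OCode, evalo O c = ψ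

/-- Turing reducibility of sets of naturals. -/
def TuringLE (X Y : Set ℕ) : Prop := RecursiveIn (chi Y) (chi X)

/-- A total function `d : ℕ → ℕ` is `Y`-computable. -/
def ComputableIn (Y : Set ℕ) (d : ℕ → ℕ) : Prop :=
  RecursiveIn (chi Y) (fun n => Part.some (d n))

/-- A binary relation on `ℕ` is `Y`-c.e. -/
def CEIn (Y : Set ℕ) (R : ℕ → ℕ → Prop) : Prop :=
  ∃ c : OCode, ∀ n m, R n m ↔ (evalo (chi Y) c (Nat.pair n m)).Dom

/-- A set `W ⊆ ℕ` is `Y`-c.e. -/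
def CE1In (Y : Set ℕ) (W : Set ℕ) : Prop :=
  ∃ c : OCode, ∀ n, n ∈ W ↔ (evalo (chi Y) c n).Dom

/-- The canonical finite set `D_u` with code `u` (binary coding). -/
def Du (u : ℕ) : Set ℕ := {k | u.testBit k}

/-- Enumeration reducibility: `Z ≤ₑ Y`. -/
def EnumLE (Z Y : Set ℕ) : Prop :=
  ∃ W : Set ℕ, CE1In ∅ W ∧ ∀ x, x ∈ Z ↔ ∃ u, Nat.pair x u ∈ W ∧ Du u ⊆ Y

/-- The Turing jump `X'` of a set `X`. -/
def jump (X : Set ℕ) : Set ℕ := {e | (phi (chi X) e e).Dom}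

/-- The halting set `K = {e : φ_e(e)↓}`. -/
def Khalt : Set ℕ := jump ∅

/-! ### Partial combinatory algebras -/

/-- `k·a·b` as a partial element. -/
def app2 {α : Type*} (app : α → α → Part α) (a b c : α) : Part α :=
  (app a b).bind fun x => app x c

/-- `s·a·b·c` as a partial element. -/
def app3 {α : Type*} (app : α → α → Part α) (a b c d : α) : Part α :=
  (app2 app a b c).bind fun x => app x d

/-- A partial applicative structure is a pca if it has (distinct) combinators `s` and `k`. -/
def IsPCA {α : Type*} (app : α → α → Part α) : Prop :=
  ∃ s k : α, s ≠ k ∧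
    (∀ a b : α, app2 app k a b = Part.some a) ∧
    (∀ a b : α, (app2 app s a b).Dom) ∧
    (∀ a b c : α,
      app3 app s a b c = (app a c).bind fun x => (app b c).bind fun y => app x y)

/-- An embedding of partial combinatory algebras: an injection that preserves
(defined) application. -/
def IsPCAEmbedding {α β : Type*} (appA : α → α → Part α) (appB : β → β → Part β)
    (f : α → β) : Prop :=
  Function.Injective f ∧ ∀ a a' c : α, c ∈ appA a a' → f c ∈ appB (f a) (f a')

/-! ### Partial numberings -/

/-- `γ : ℕ ⇀ α` is a partial numbering (i.e. surjective). -/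
def IsNumbering {α : Type*} (γ : ℕ →. α) : Prop := ∀ a : α, ∃ n, a ∈ γ n

/-- `d` is an `(a⊥, a⊤)`-decider for `X` with respect to `γ`. -/
def IsDecider {α : Type*} (γ : ℕ →. α) (abot atop : α) (X : Set ℕ) (d : ℕ → ℕ) : Prop :=
  ∀ n, (n ∉ X → γ (d n) = Part.some abot) ∧ (n ∈ X → γ (d n) = Part.some atop)

/-- `γ` has `Y`-c.e. inequivalence. -/
def CEInequiv {α : Type*} (Y : Set ℕ) (γ : ℕ →. α) : Prop :=
  ∃ R : ℕ → ℕ → Prop, CEIn Y R ∧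
    ∀ n m, (γ n).Dom → (γ m).Dom → (R n m ↔ γ n ≠ γ m)

/-- `γ` is a `Y`-effectively pca-valued partial numbering: the application is
represented on codes by a partial `Y`-computable function `ψ`. -/
def EffValued {α : Type*} (Y : Set ℕ) (app : α → α → Part α) (γ : ℕ →. α) : Prop :=
  ∃ ψ : ℕ →. ℕ, RecursiveIn (chi Y) ψ ∧
    ∀ (n m : ℕ) (a b c : α), a ∈ γ n → b ∈ γ m → c ∈ app a b →
      ∃ j, j ∈ ψ (Nat.pair n m) ∧ c ∈ γ j

/-- `γ` is a strongly `Y`-effectively pca-valued partial numbering. -/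
def StrongEffValued {α : Type*} (Y : Set ℕ) (app : α → α → Part α) (γ : ℕ →. α) : Prop :=
  ∃ ψ : ℕ →. ℕ, RecursiveIn (chi Y) ψ ∧
    (∀ (n m : ℕ) (a b c : α), a ∈ γ n → b ∈ γ m → c ∈ app a b →
      ∃ j, j ∈ ψ (Nat.pair n m) ∧ c ∈ γ j) ∧
    (∀ (n m k l : ℕ) (a b a' b' c : α), a ∈ γ n → b ∈ γ m → a' ∈ γ k → b' ∈ γ l →
      c ∈ app a b → c ∈ app a' b' → ψ (Nat.pair n m) = ψ (Nat.pair k l))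

/-! ### The models -/

/-- Kleene's first model relativized to `X`: application `n · m = Φ_n^X(m)`. -/
noncomputable def k1App (X : Set ℕ) : ℕ → ℕ → Part ℕ := fun n m => phi (chi X) n m

/-- A total function as a partial function. -/
def toPFun (g : ℕ → ℕ) : ℕ →. ℕ := fun n => Part.some (g n)

/-- Join `f ⊕ g` of two partial functions. -/
def pjoin (f g : ℕ →. ℕ) : ℕ →. ℕ := fun n =>
  if n % 2 = 0 then f (n / 2) else g (n / 2)

/-- The totalization of a partial function, as a partial element of `ℕ → ℕ`:
defined iff `ψ` is total. -/
def partToTotal (ψ : ℕ →. ℕ) : Part (ℕ → ℕ) :=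
  ⟨∀ n, (ψ n).Dom, fun H n => (ψ n).get (H n)⟩

/-- Application in Kleene's second model `K₂`: `g · h = Φ^{g⊕h}_{g 0}`,
defined iff this function is total. -/
def k2App (g h : ℕ → ℕ) : Part (ℕ → ℕ) :=
  partToTotal (phi (pjoin (toPFun g) (toPFun h)) (g 0))

/-- Application in van Oosten's sequential model `B`: `θ · ρ = Φ^{θ⊕ρ}_{θ 0}`
(always defined, as a partial function). -/
def bApp (θ ρ : ℕ →. ℕ) : Part (ℕ →. ℕ) :=
  Part.some (fun n => (θ 0).bind fun e => phi (pjoin θ ρ) e n)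

/-- Restriction of a partial applicative structure to a subset. -/
def subApp {α : Type*} (app : α → α → Part α) (P : α → Prop)
    (a b : Subtype P) : Part (Subtype P) :=
  (app a.1 b.1).bind fun c => Part.assert (P c) fun h => Part.some ⟨c, h⟩

/-- Carrier of `K₂^X` : the total `X`-computable functions. -/
def K2el (X : Set ℕ) : Type := {g : ℕ → ℕ // RecursiveIn (chi X) (toPFun g)}

/-- Application in `K₂^X`. -/
def k2XApp (X : Set ℕ) : K2el X → K2el X → Part (K2el X) :=
  subApp k2App _

/-- Carrier of `B^X` : the partial `X`-computable functions. -/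
def Bel (X : Set ℕ) : Type := {θ : ℕ →. ℕ // RecursiveIn (chi X) θ}

/-- Application in `B^X`. -/
def bXApp (X : Set ℕ) : Bel X → Bel X → Part (Bel X) :=
  subApp bApp _

/-- Application in Scott's graph model `G`. -/
def gApp (A B : Set ℕ) : Part (Set ℕ) :=
  Part.some {n | ∃ u, Nat.pair n u ∈ A ∧ Du u ⊆ B}

/-- Carrier of `G^Z` : the sets enumeration-reducible to `Z`. -/
def Gel (Z : Set ℕ) : Type := {A : Set ℕ // EnumLE A Z}

/-- Application in `G^Z`. -/
def gXApp (Z : Set ℕ) : Gel Z → Gel Z → Part (Gel Z) :=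
  subApp gApp _

/-- `X ⊕ X̄ = {2n : n ∈ X} ∪ {2n+1 : n ∉ X}`. -/
def joinCompl (X : Set ℕ) : Set ℕ :=
  {k | ∃ n, (k = 2 * n ∧ n ∈ X) ∨ (k = 2 * n + 1 ∧ n ∉ X)}

/-! ### The λ-calculus -/

/-- Untyped λ-terms (de Bruijn representation). -/
inductive Lam : Type
  | var : ℕ → Lam
  | app : Lam → Lam → Lam
  | abs : Lam → Lam

/-- Lift (shift up) the free variables `≥ d` of a term. -/
def Lam.lift : Lam → ℕ → Lam
  | .var n, d => if n < d then .var n else .var (n + 1)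
  | .app M N, d => .app (M.lift d) (N.lift d)
  | .abs M, d => .abs (M.lift (d + 1))

/-- Substitution `M[k := N]` (de Bruijn). -/
def Lam.subst : Lam → ℕ → Lam → Lam
  | .var n, k, N => if n = k then N else if k < n then .var (n - 1) else .var n
  | .app M M', k, N => .app (M.subst k N) (M'.subst k N)
  | .abs M, k, N => .abs (M.subst (k + 1) (N.lift 0))

/-- β-equivalence of λ-terms. -/
inductive BetaEq : Lam → Lam → Prop
  | beta (M N : Lam) : BetaEq (.app (.abs M) N) (M.subst 0 N)
  | refl (M : Lam) : BetaEq M M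
  | symm {M N : Lam} : BetaEq M N → BetaEq N M
  | trans {M N P : Lam} : BetaEq M N → BetaEq N P → BetaEq M P
  | appCongr {M M' N N' : Lam} :
      BetaEq M M' → BetaEq N N' → BetaEq (.app M N) (.app M' N')
  | absCongr {M M' : Lam} : BetaEq M M' → BetaEq (.abs M) (.abs M')

/-- βη-equivalence of λ-terms. -/
inductive BetaEtaEq : Lam → Lam → Prop
  | beta (M N : Lam) : BetaEtaEq (.app (.abs M) N) (M.subst 0 N)
  | eta (M : Lam) : BetaEtaEq (.abs (.app (M.lift 0) (.var 0))) M
  | refl (M : Lam) : BetaEtaEq M M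
  | symm {M N : Lam} : BetaEtaEq M N → BetaEtaEq N M
  | trans {M N P : Lam} : BetaEtaEq M N → BetaEtaEq N P → BetaEtaEq M P
  | appCongr {M M' N N' : Lam} :
      BetaEtaEq M M' → BetaEtaEq N N' → BetaEtaEq (.app M N) (.app M' N')
  | absCongr {M M' : Lam} : BetaEtaEq M M' → BetaEtaEq (.abs M) (.abs M')

def lamBetaSetoid : Setoid Lam := ⟨BetaEq, ⟨BetaEq.refl, BetaEq.symm, BetaEq.trans⟩⟩

def lamBetaEtaSetoid : Setoid Lam :=
  ⟨BetaEtaEq, ⟨BetaEtaEq.refl, BetaEtaEq.symm, BetaEtaEq.trans⟩⟩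

/-- The pca `λ` of λ-terms modulo β-equivalence. -/
def LamBeta : Type := Quotient lamBetaSetoid

/-- The pca `λη` of λ-terms modulo βη-equivalence. -/
def LamBetaEta : Type := Quotient lamBetaEtaSetoid

/-- Application in `λ` (total). -/
def lamBetaApp : LamBeta → LamBeta → Part LamBeta := fun a b =>
  Part.some (Quotient.map₂ Lam.app (fun _ _ h1 _ _ h2 => BetaEq.appCongr h1 h2) a b)

/-- Application in `λη` (total). -/
def lamBetaEtaApp : LamBetaEta → LamBetaEta → Part LamBetaEta := fun a b =>
  Part.some (Quotient.map₂ Lam.app (fun _ _ h1 _ _ h2 => BetaEtaEq.appCongr h1 h2) a b)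

/-! In `B^X` one element sends each numeral `n` to the numeral `0` if `n ∈ X'`, and to the nowhere
defined function `⊥` otherwise. A map `f` that preserves application carries the numerals to
elements with `Y`-computable indices, because a single application of the successor leads from each
numeral to the next. One more application yields a `Y`-computable sequence of indices, naming the
image of `0` where `n ∈ X'` and the image of `⊥` elsewhere. If the two images differ and inequality
of elements is `Y`-c.e. in their indices, as it is for the total functions of `K₂^Y`, then `X'` and
its complement are both `Y`-c.e., so `X'` is `Y`-computable. -/

open Encodable Filter Nat.Partrec

/-- `Ψ i` is computed from the oracle `O i` by one code that does not depend on `i`. A constant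
family over `Unit` expresses `RecursiveIn`, the family `toPFun` of all total oracles expresses
that `Ψ` is a Turing functional. -/
def UniformlyRecursiveIn {ι : Type*} (O Ψ : ι → ℕ →. ℕ) : Prop :=
  ∃ c : OCode, ∀ i, evalo (O i) c = Ψ i

section Evaluation

variable {O : ℕ →. ℕ} {a b : OCode} {n m v : ℕ}

theorem mem_evalo_pair :
    v ∈ evalo O (.pair a b) n ↔ ∃ x ∈ evalo O a n, ∃ y ∈ evalo O b n, Nat.pair x y = v := by
  simp [evalo, Seq.seq]

theorem mem_evalo_comp : v ∈ evalo O (.comp a b) n ↔ ∃ x ∈ evalo O b n, v ∈ evalo O a x :=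
  Part.mem_bind_iff

theorem mem_evalo_prec_zero : v ∈ evalo O (.prec a b) (Nat.pair n 0) ↔ v ∈ evalo O a n := by
  simp [evalo]

theorem mem_evalo_prec_succ : v ∈ evalo O (.prec a b) (Nat.pair n (m + 1)) ↔
    ∃ i ∈ evalo O (.prec a b) (Nat.pair n m), v ∈ evalo O b (Nat.pair n (Nat.pair m i)) := by
  simp [evalo]

theorem mem_evalo_rfind' : v ∈ evalo O (.rfind' a) (Nat.pair n m) ↔
    ∃ k, (0 ∈ evalo O a (Nat.pair n (k + m)) ∧
      ∀ j < k, ∃ x ∈ evalo O a (Nat.pair n (j + m)), x ≠ 0) ∧ k + m = v := by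
  simp only [evalo, Nat.unpaired, Nat.unpair_pair, Part.mem_map_iff]
  refine exists_congr fun k => and_congr_left' <| Nat.mem_rfind.trans ?_
  simp [Part.mem_map_iff]

end Evaluation

theorem eventually_mem_evalo {ι : Type*} {l : Filter ι} {O : ℕ →. ℕ} {F : ι → ℕ →. ℕ}
    (h : ∀ n v, v ∈ O n → ∀ᶠ s in l, v ∈ F s n) (c : OCode) :
    ∀ n v, v ∈ evalo O c n → ∀ᶠ s in l, v ∈ evalo (F s) c n := by
  induction c with
  | zero | succ | left | right => exact fun n v hv => .of_forall fun _ => hv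
  | oracle => exact h
  | pair a b iha ihb =>
    simp only [mem_evalo_pair]
    rintro n v ⟨x, hx, y, hy, hv⟩
    filter_upwards [iha _ _ hx, ihb _ _ hy] with s hx hy using ⟨x, hx, y, hy, hv⟩
  | comp a b iha ihb =>
    simp only [mem_evalo_comp]
    rintro n v ⟨x, hx, hv⟩
    filter_upwards [ihb _ _ hx, iha _ _ hv] with s hx hv using ⟨x, hx, hv⟩
  | prec a b iha ihb =>
    intro n
    rw [← Nat.pair_unpair n]
    induction n.unpair.2 with
    | zero => simpa only [mem_evalo_prec_zero] using iha _
    | succ k ih =>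
      simp only [mem_evalo_prec_succ]
      rintro v ⟨x, hx, hv⟩
      filter_upwards [ih _ hx, ihb _ _ hv] with s hx hv using ⟨x, hx, hv⟩
  | rfind' a iha =>
    intro n
    rw [← Nat.pair_unpair n]
    simp only [mem_evalo_rfind']
    rintro v ⟨k, ⟨hk, hlt⟩, hv⟩
    have hlt' : ∀ᶠ s in l, ∀ j ∈ Set.Iio k,
        ∃ x ∈ evalo (F s) a (Nat.pair n.unpair.1 (j + n.unpair.2)), x ≠ 0 := by
      refine (eventually_all_finite (Set.finite_Iio k)).2 fun j hj => ?_
      obtain ⟨x, hx, hne⟩ := hlt j hj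
      filter_upwards [iha _ _ hx] with s hx using ⟨x, hx, hne⟩
    filter_upwards [iha _ _ hk, hlt'] with s hk hlt using ⟨k, ⟨hk, hlt⟩, hv⟩

theorem mem_evalo_mono {O O' : ℕ →. ℕ} (h : ∀ n v, v ∈ O n → v ∈ O' n) {c : OCode} {n v : ℕ}
    (hv : v ∈ evalo O c n) : v ∈ evalo O' c n :=
  eventually_pure.1 <| eventually_mem_evalo (l := pure ()) (F := fun _ => O')
    (fun n v hv => eventually_pure.2 (h n v hv)) c n v hv

namespace OCode

theorem ofNat_pair (i j : ℕ) : ofNat (4 * Nat.pair i j + 5) = .pair (ofNat i) (ofNat j) := by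
  rw [ofNat]
  simp

theorem ofNat_comp (i j : ℕ) : ofNat (4 * Nat.pair i j + 6) = .comp (ofNat i) (ofNat j) := by
  rw [ofNat, show (4 * Nat.pair i j + 1) % 4 = 1 by omega,
    show (4 * Nat.pair i j + 1) / 4 = Nat.pair i j by omega]
  simp

theorem ofNat_prec (i j : ℕ) : ofNat (4 * Nat.pair i j + 7) = .prec (ofNat i) (ofNat j) := by
  rw [ofNat, show (4 * Nat.pair i j + 2) % 4 = 2 by omega,
    show (4 * Nat.pair i j + 2) / 4 = Nat.pair i j by omega]
  simp

theorem ofNat_rfind' (i j : ℕ) : ofNat (4 * Nat.pair i j + 8) = .rfind' (ofNat i) := by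
  rw [ofNat, show (4 * Nat.pair i j + 3) % 4 = 3 by omega,
    show (4 * Nat.pair i j + 3) / 4 = Nat.pair i j by omega]
  simp

theorem ofNat_surjective : Function.Surjective ofNat := by
  intro c
  induction c with
  | zero => exact ⟨0, by rw [ofNat]⟩
  | succ => exact ⟨1, by rw [ofNat]⟩
  | left => exact ⟨2, by rw [ofNat]⟩
  | right => exact ⟨3, by rw [ofNat]⟩
  | oracle => exact ⟨4, by rw [ofNat]⟩
  | pair a b iha ihb =>
    obtain ⟨⟨i, rfl⟩, j, rfl⟩ := And.intro iha ihb
    exact ⟨_, ofNat_pair i j⟩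
  | comp a b iha ihb =>
    obtain ⟨⟨i, rfl⟩, j, rfl⟩ := And.intro iha ihb
    exact ⟨_, ofNat_comp i j⟩
  | prec a b iha ihb =>
    obtain ⟨⟨i, rfl⟩, j, rfl⟩ := And.intro iha ihb
    exact ⟨_, ofNat_prec i j⟩
  | rfind' a iha =>
    obtain ⟨i, rfl⟩ := iha
    exact ⟨_, ofNat_rfind' i 0⟩

/-- The oracle-free code as an oracle code that never queries its oracle. -/
def ofCode : Code → OCode
  | .zero => .zero
  | .succ => .succ
  | .left => .left
  | .right => .right
  | .pair a b => .pair (ofCode a) (ofCode b)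
  | .comp a b => .comp (ofCode a) (ofCode b)
  | .prec a b => .prec (ofCode a) (ofCode b)
  | .rfind' a => .rfind' (ofCode a)

theorem evalo_ofCode (O : ℕ →. ℕ) (c : Code) : evalo O (ofCode c) = c.eval := by
  induction c with
  | zero | succ | left | right => rfl
  | pair a b iha ihb | comp a b iha ihb | prec a b iha ihb =>
    simp only [ofCode, evalo, Code.eval, iha, ihb]; rfl
  | rfind' a iha => simp only [ofCode, evalo, Code.eval, iha]; rfl

/-- The oracle-free code obtained by answering oracle queries with the code `o`. -/
def toCode (o : Code) : OCode → Code
  | .zero => .zero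
  | .succ => .succ
  | .left => .left
  | .right => .right
  | .oracle => o
  | .pair a b => .pair (toCode o a) (toCode o b)
  | .comp a b => .comp (toCode o a) (toCode o b)
  | .prec a b => .prec (toCode o a) (toCode o b)
  | .rfind' a => .rfind' (toCode o a)

theorem eval_toCode (o : Code) (c : OCode) : (c.toCode o).eval = evalo o.eval c := by
  induction c with
  | zero | succ | left | right | oracle => rfl
  | pair a b iha ihb | comp a b iha ihb | prec a b iha ihb =>
    simp only [toCode, evalo, Code.eval, iha, ihb]; rfl
  | rfind' a iha => simp only [toCode, evalo, Code.eval, iha]; rfl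

/-- The course-of-values step of `OCode.toCode` on indices: from the list of the translations of
`OCode.ofNat 0, …, OCode.ofNat (e - 1)` to that of `OCode.ofNat e`. -/
def toCodeStep (o : Code) (l : List Code) : Code :=
  let m := l.length - 5
  let a := l.getD (m / 4).unpair.1 .zero
  let b := l.getD (m / 4).unpair.2 .zero
  [.zero, .succ, .left, .right, o, .pair a b, .comp a b, .prec a b, .rfind' a].getD
    (if l.length < 5 then l.length else m % 4 + 5) .zero

theorem primrec₂_toCodeStep : Primrec₂ toCodeStep := by
  have hlen : Primrec fun p : Code × List Code => p.2.length := Primrec.list_length.comp .snd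
  have hm : Primrec fun p : Code × List Code => p.2.length - 5 :=
    Primrec.nat_sub.comp hlen (.const 5)
  have hsub : Primrec fun p : Code × List Code => ((p.2.length - 5) / 4).unpair :=
    Primrec.unpair.comp (Primrec.nat_div.comp hm (.const 4))
  have ha := (Primrec.list_getD Code.zero).comp .snd (Primrec.fst.comp hsub)
  have hb := (Primrec.list_getD Code.zero).comp .snd (Primrec.snd.comp hsub)
  refine (Primrec.list_getD Code.zero).comp ?_ ?_
  · refine Primrec.list_cons.comp (.const _) <| Primrec.list_cons.comp (.const _) <|
      Primrec.list_cons.comp (.const _) <| Primrec.list_cons.comp (.const _) <|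
      Primrec.list_cons.comp .fst <| Primrec.list_cons.comp (Code.primrec₂_pair.comp ha hb) <|
      Primrec.list_cons.comp (Code.primrec₂_comp.comp ha hb) <|
      Primrec.list_cons.comp (Code.primrec₂_prec.comp ha hb) <|
      Primrec.list_cons.comp (Code.primrec_rfind'.comp ha) (.const [])
  · exact .ite (Primrec.nat_lt.comp hlen (.const 5)) hlen
      (Primrec.nat_add.comp (Primrec.nat_mod.comp hm (.const 4)) (.const 5))

theorem primrec₂_toCode_ofNat : Primrec₂ fun o e => (ofNat e).toCode o := by
  refine Primrec.nat_strong_rec _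
    (Primrec.option_some.comp₂ primrec₂_toCodeStep) fun o e => congrArg some ?_
  match e with
  | 0 | 1 | 2 | 3 | 4 => simp [toCodeStep, ofNat, toCode]
  | m + 5 =>
    have hi : (m / 4).unpair.1 < m + 5 := by grind [Nat.unpair_left_le]
    have hj : (m / 4).unpair.2 < m + 5 := by grind [Nat.unpair_right_le]
    have hlt : m % 4 < 4 := Nat.mod_lt _ (by norm_num)
    rw [ofNat]
    interval_cases hmod : m % 4 <;> simp [toCodeStep, hmod, hi, hj, toCode]

end OCode

theorem primrec_unpair_fst : Primrec fun n : ℕ => n.unpair.1 :=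
  Primrec.fst.comp .unpair

theorem primrec_unpair_snd : Primrec fun n : ℕ => n.unpair.2 :=
  Primrec.snd.comp .unpair

theorem toPFun_apply (g : ℕ → ℕ) (n : ℕ) : toPFun g n = Part.some (g n) :=
  rfl

namespace UniformlyRecursiveIn

variable {ι : Type*} {O Φ Ψ : ι → ℕ →. ℕ} {F G : ι → ℕ → ℕ} {f : ℕ → ℕ}

theorem recursiveIn (h : UniformlyRecursiveIn O Ψ) (i : ι) : RecursiveIn (O i) (Ψ i) :=
  h.imp fun _ hc => hc i

theorem of_eq (h : UniformlyRecursiveIn O Φ) (H : ∀ i n, Φ i n = Ψ i n) :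
    UniformlyRecursiveIn O Ψ :=
  (funext fun i => funext (H i) : Φ = Ψ) ▸ h

theorem oracle : UniformlyRecursiveIn O O :=
  ⟨.oracle, fun _ => rfl⟩

theorem of_partrec {ψ : ℕ →. ℕ} (h : Nat.Partrec ψ) : UniformlyRecursiveIn O fun _ => ψ := by
  obtain ⟨c, rfl⟩ := Code.exists_code.1 h
  exact ⟨.ofCode c, fun i => OCode.evalo_ofCode (O i) c⟩

theorem of_primrec (h : Primrec f) : UniformlyRecursiveIn O fun _ => toPFun f :=
  of_partrec <| Nat.Partrec.of_primrec <| Primrec.nat_iff.1 h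

theorem bind (hΨ : UniformlyRecursiveIn O Ψ) (hΦ : UniformlyRecursiveIn O Φ) :
    UniformlyRecursiveIn O fun i n => (Φ i n).bind (Ψ i) := by
  obtain ⟨a, ha⟩ := hΨ
  obtain ⟨b, hb⟩ := hΦ
  exact ⟨.comp a b, fun i => by simp only [evalo, ha, hb]; rfl⟩

theorem comp (hΨ : UniformlyRecursiveIn O Ψ) (hF : UniformlyRecursiveIn O fun i => toPFun (F i)) :
    UniformlyRecursiveIn O fun i n => Ψ i (F i n) :=
  (hΨ.bind hF).of_eq fun i n => Part.bind_some (F i n) (Ψ i)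

theorem comp_primrec (hΨ : UniformlyRecursiveIn O Ψ) (hf : Primrec f) :
    UniformlyRecursiveIn O fun i n => Ψ i (f n) :=
  hΨ.comp (of_primrec hf)

theorem pair (hΦ : UniformlyRecursiveIn O Φ) (hΨ : UniformlyRecursiveIn O Ψ) :
    UniformlyRecursiveIn O fun i n => (Φ i n).bind fun x => (Ψ i n).map (Nat.pair x) := by
  obtain ⟨a, ha⟩ := hΦ
  obtain ⟨b, hb⟩ := hΨ
  refine ⟨.pair a b, fun i => ?_⟩
  simp only [evalo, ha, hb, Seq.seq, Part.map_eq_map, Part.bind_map]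
  rfl

theorem natPair (hF : UniformlyRecursiveIn O fun i => toPFun (F i))
    (hG : UniformlyRecursiveIn O fun i => toPFun (G i)) :
    UniformlyRecursiveIn O fun i => toPFun fun n => Nat.pair (F i n) (G i n) :=
  (hF.pair hG).of_eq fun i n => by simp only [toPFun_apply, Part.bind_some, Part.map_some]

theorem map (hΨ : UniformlyRecursiveIn O Ψ) (hf : Primrec f) :
    UniformlyRecursiveIn O fun i n => (Ψ i n).map f :=
  ((of_primrec hf).bind hΨ).of_eq fun i n => Part.bind_some_eq_map f (Ψ i n)

theorem prec (hΦ : UniformlyRecursiveIn O Φ) (hΨ : UniformlyRecursiveIn O Ψ) :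
    UniformlyRecursiveIn O fun i z => z.unpair.2.rec (Φ i z.unpair.1) fun y IH =>
      IH.bind fun v => Ψ i (Nat.pair z.unpair.1 (Nat.pair y v)) := by
  obtain ⟨a, ha⟩ := hΦ
  obtain ⟨b, hb⟩ := hΨ
  exact ⟨.prec a b, fun i => by simp only [evalo, ha, hb]; rfl⟩

theorem natRec (hΨ : UniformlyRecursiveIn O Ψ) (b : ℕ) :
    UniformlyRecursiveIn O fun i n => n.rec (Part.some b) fun y IH =>
      IH.bind fun v => Ψ i (Nat.pair y v) := by
  simpa only [toPFun, Nat.unpair_pair] using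
    ((of_primrec (.const b)).prec (hΨ.comp_primrec primrec_unpair_snd)).comp_primrec
      (f := Nat.pair 0) (Primrec₂.natPair.comp (.const 0) .id)

-- Primitive recursion with exponent `0` or `1`: only the total branch is always evaluated.
theorem ite_total {p : ℕ → Prop} [DecidablePred p] (hp : PrimrecPred p)
    (hΨ : UniformlyRecursiveIn O Ψ) (hF : UniformlyRecursiveIn O fun i => toPFun (F i)) :
    UniformlyRecursiveIn O fun i n => if p n then Ψ i n else Part.some (F i n) := by
  refine ((hF.prec (hΨ.comp_primrec primrec_unpair_fst)).comp_primrec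
    (f := fun n => Nat.pair n (if p n then 1 else 0))
    (Primrec₂.natPair.comp .id (.ite hp (.const 1) (.const 0)))).of_eq fun i n => ?_
  split_ifs <;> simp [toPFun_apply]

theorem rfind (hΨ : UniformlyRecursiveIn O Ψ) :
    UniformlyRecursiveIn O fun i n =>
      Nat.rfind fun k => (Ψ i (Nat.pair n k)).map fun x => decide (x = 0) := by
  obtain ⟨a, ha⟩ := hΨ
  have h : UniformlyRecursiveIn O fun i => evalo (O i) (.rfind' a) := ⟨_, fun _ => rfl⟩
  refine (h.comp_primrec (f := fun n => Nat.pair n 0)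
    (Primrec₂.natPair.comp .id (.const 0))).of_eq fun i n => ?_
  simp [evalo, ha, Part.map_id']

theorem rfindOpt {T : ι → ℕ → ℕ → Option ℕ}
    (hT : UniformlyRecursiveIn O fun i => toPFun fun w => encode (T i w.unpair.1 w.unpair.2)) :
    UniformlyRecursiveIn O fun i n => Nat.rfindOpt (T i n) := by
  have hsome := (hT.map (f := fun y => 1 - y) (Primrec.nat_sub.comp (.const 1) .id)).rfind
  have hval := (hT.map Primrec.pred).bind ((of_primrec Primrec.id).pair hsome)
  refine hval.of_eq fun i n => ?_
  simp only [toPFun_apply, Part.bind_some, Part.map_some, Nat.unpair_pair, Nat.rfindOpt,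
    Part.bind_map]
  have hdecide (k : ℕ) : decide (1 - encode (T i n k) = 0) = (T i n k).isSome := by
    cases T i n k <;> simp
  refine Part.ext fun v => ?_
  simp only [hdecide, Part.mem_bind_iff, id]
  refine exists_congr fun k => and_congr_right fun hk => ?_
  obtain ⟨x, hx⟩ := Option.isSome_iff_exists.1 (Part.mem_some_iff.1 (Nat.rfind_spec hk)).symm
  simp [hx]

end UniformlyRecursiveIn

theorem uniformlyRecursiveIn_unit {O ψ : ℕ →. ℕ} :
    UniformlyRecursiveIn (fun _ : Unit => O) (fun _ => ψ) ↔ RecursiveIn O ψ :=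
  exists_congr fun _ => forall_const Unit

section NormalForm

variable {g : ℕ → ℕ} {e k n v : ℕ}

theorem exists_code_eval_eq_getElem? :
    ∃ c : Code, ∀ (l : List ℕ) (n : ℕ), c.eval (Nat.pair (encode l) n) = (l[n]? : Part ℕ) := by
  have h : Partrec fun p : List ℕ × ℕ => (p.1[p.2]? : Part ℕ) :=
    Computable.ofOption Primrec.list_getElem?.to_comp
  obtain ⟨c, hc⟩ := Code.exists_code.1 h
  refine ⟨c, fun l n => ?_⟩
  simp [hc, Part.map_id']

/-- A code for the finite restriction of the oracle `g` to the queries below `k`. -/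
noncomputable def prefixCode (g : ℕ → ℕ) (k : ℕ) : Code :=
  exists_code_eval_eq_getElem?.choose.curry (encode ((List.range k).map g))

theorem mem_eval_prefixCode : v ∈ (prefixCode g k).eval n ↔ n < k ∧ v = g n := by
  simp only [prefixCode, Code.eval_curry, exists_code_eval_eq_getElem?.choose_spec, Part.mem_coe]
  grind

/-- The result, if any, of running the oracle code with index `z.unpair.1` on the input
`z.unpair.2` for `s.unpair.1` steps while only the first `s.unpair.2` values of the oracle `g` are
available. -/
noncomputable def stage (g : ℕ → ℕ) (z s : ℕ) : Option ℕ :=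
  ((OCode.ofNat z.unpair.1).toCode (prefixCode g s.unpair.2)).evaln s.unpair.1 z.unpair.2

theorem mem_phi_iff_exists_stage :
    v ∈ phi (toPFun g) e n ↔ ∃ s, v ∈ stage g (Nat.pair e n) s := by
  simp only [stage, Nat.unpair_pair]
  constructor
  · intro hv
    have hprefix : ∀ n v, v ∈ toPFun g n → ∀ᶠ k in atTop, v ∈ (prefixCode g k).eval n :=
      fun n v hv => (eventually_gt_atTop n).mono fun k hk =>
        mem_eval_prefixCode.2 ⟨hk, Part.mem_some_iff.1 hv⟩
    obtain ⟨k, hk⟩ := (eventually_mem_evalo hprefix _ n v hv).exists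
    rw [← OCode.eval_toCode] at hk
    obtain ⟨t, ht⟩ := Code.evaln_complete.1 hk
    exact ⟨Nat.pair t k, by simpa only [Nat.unpair_pair] using ht⟩
  · rintro ⟨s, hs⟩
    have hv := Code.evaln_sound hs
    rw [OCode.eval_toCode] at hv
    exact mem_evalo_mono (fun n v hv => Part.mem_some_iff.2 (mem_eval_prefixCode.1 hv).2) hv

theorem phi_toPFun_eq_rfindOpt : phi (toPFun g) e n = Nat.rfindOpt (stage g (Nat.pair e n)) := by
  refine Part.ext fun v =>
    ⟨fun hv => ?_, fun hv => mem_phi_iff_exists_stage.2 (Nat.rfindOpt_spec hv)⟩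
  obtain ⟨s, hs⟩ := mem_phi_iff_exists_stage.1 hv
  obtain ⟨w, hw⟩ := Part.dom_iff_mem.1 (Nat.rfindOpt_dom.2 ⟨s, v, hs⟩)
  rwa [Part.mem_unique hv (mem_phi_iff_exists_stage.2 (Nat.rfindOpt_spec hw))]

theorem uniformlyRecursiveIn_range_map :
    UniformlyRecursiveIn toPFun fun g => toPFun fun k => encode ((List.range k).map g) := by
  let append (w : ℕ) : ℕ := encode (Denumerable.ofNat (List ℕ) w.unpair.2 ++ [w.unpair.1])
  have happend : Primrec append := Primrec.encode.comp <| Primrec.list_append.comp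
    ((Primrec.ofNat _).comp primrec_unpair_snd)
    (Primrec.list_cons.comp primrec_unpair_fst (.const []))
  have hquery : UniformlyRecursiveIn toPFun fun g => toPFun fun w => g w.unpair.1 :=
    UniformlyRecursiveIn.oracle.comp_primrec primrec_unpair_fst
  have hstep : UniformlyRecursiveIn toPFun fun g => toPFun fun w =>
      append (Nat.pair (g w.unpair.1) w.unpair.2) :=
    (UniformlyRecursiveIn.of_primrec happend).comp
      (hquery.natPair (.of_primrec primrec_unpair_snd))
  refine (hstep.natRec (encode ([] : List ℕ))).of_eq fun g k => ?_
  induction k with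
  | zero => rfl
  | succ k ih =>
    simp only [ih]
    simp [toPFun_apply, append, List.range_succ]

theorem uniformlyRecursiveIn_stage :
    UniformlyRecursiveIn toPFun fun g => toPFun fun w =>
      encode (stage g w.unpair.1 w.unpair.2) := by
  let run (w : ℕ) : ℕ := encode <|
    ((OCode.ofNat w.unpair.2.unpair.1.unpair.1).toCode
      (exists_code_eval_eq_getElem?.choose.curry w.unpair.1)).evaln
      w.unpair.2.unpair.2.unpair.1 w.unpair.2.unpair.1.unpair.2
  have hl := primrec_unpair_fst
  have hr := primrec_unpair_snd
  have hrun : Primrec run := Primrec.encode.comp <| Code.primrec_evaln.comp <|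
    ((hl.comp (hr.comp hr)).pair <| OCode.primrec₂_toCode_ofNat.comp
      (Code.primrec₂_curry.comp (.const _) hl) (hl.comp (hl.comp hr))).pair (hr.comp (hl.comp hr))
  refine ((UniformlyRecursiveIn.of_primrec hrun).comp <|
    (uniformlyRecursiveIn_range_map.comp_primrec (hr.comp hr)).natPair
      (.of_primrec Primrec.id)).of_eq fun g w => ?_
  simp [toPFun_apply, run, stage, prefixCode]

theorem uniformlyRecursiveIn_phi :
    UniformlyRecursiveIn toPFun fun g z => phi (toPFun g) z.unpair.1 z.unpair.2 :=
  uniformlyRecursiveIn_stage.rfindOpt.of_eq fun g z => by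
    rw [phi_toPFun_eq_rfindOpt, Nat.pair_unpair]

end NormalForm

theorem RecursiveIn.exists_phi_eq {O ψ : ℕ →. ℕ} (h : RecursiveIn O ψ) : ∃ e, phi O e = ψ := by
  obtain ⟨c, rfl⟩ := h
  exact (OCode.ofNat_surjective c).imp fun e he => congrArg (evalo O) he

theorem RecursiveIn.exists_merge {g : ℕ → ℕ} {φ ψ : ℕ →. ℕ} (hφ : RecursiveIn (toPFun g) φ)
    (hψ : RecursiveIn (toPFun g) ψ) : ∃ χ, RecursiveIn (toPFun g) χ ∧
      ∀ n, (∀ v ∈ χ n, v ∈ φ n ∨ v ∈ ψ n) ∧ ((χ n).Dom ↔ (φ n).Dom ∨ (ψ n).Dom) := by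
  obtain ⟨⟨a, rfl⟩, b, rfl⟩ := And.intro hφ.exists_phi_eq hψ.exists_phi_eq
  let T (g : ℕ → ℕ) (n s : ℕ) : Option ℕ := stage g (Nat.pair a n) s <|> stage g (Nat.pair b n) s
  have horElse : Primrec fun w : ℕ => encode
      (Denumerable.ofNat (Option ℕ) w.unpair.1 <|> Denumerable.ofNat (Option ℕ) w.unpair.2) :=
    Primrec.encode.comp <| Primrec.option_orElse.comp
      ((Primrec.ofNat _).comp primrec_unpair_fst) ((Primrec.ofNat _).comp primrec_unpair_snd)
  have hstage (e : ℕ) : UniformlyRecursiveIn toPFun fun g => toPFun fun w =>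
      encode (stage g (Nat.pair e w.unpair.1) w.unpair.2) :=
    (uniformlyRecursiveIn_stage.comp_primrec
      (f := fun w => Nat.pair (Nat.pair e w.unpair.1) w.unpair.2) <| Primrec₂.natPair.comp
        (Primrec₂.natPair.comp (.const e) primrec_unpair_fst) primrec_unpair_snd).of_eq
      fun g w => by simp [toPFun_apply]
  have hT : UniformlyRecursiveIn toPFun fun g => toPFun fun w =>
      encode (T g w.unpair.1 w.unpair.2) :=
    ((UniformlyRecursiveIn.of_primrec horElse).comp ((hstage a).natPair (hstage b))).of_eq
      fun g w => by simp [toPFun_apply, T]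
  refine ⟨_, hT.rfindOpt.recursiveIn g, fun n => ⟨fun v hv => ?_, Nat.rfindOpt_dom.trans ?_⟩⟩
  · simp only [mem_phi_iff_exists_stage]
    obtain ⟨s, hs⟩ := Nat.rfindOpt_spec hv
    exact ((Option.orElse_eq_some ..).1 hs).imp (⟨s, ·⟩) fun h => ⟨s, h.2⟩
  · have hsome (o o' : Option ℕ) : (∃ v, v ∈ (o <|> o')) ↔ (∃ v, v ∈ o) ∨ ∃ v, v ∈ o' := by
      cases o <;> simp
    simp only [Part.dom_iff_mem, mem_phi_iff_exists_stage, T, hsome, exists_or]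
    exact or_congr exists_comm exists_comm

theorem TuringLE.of_ce1In {Y Z : Set ℕ} (hZ : CE1In Y Z) (hZc : CE1In Y Zᶜ) : TuringLE Z Y := by
  obtain ⟨⟨c, hc⟩, c', hc'⟩ := And.intro hZ hZc
  have hmap (c : OCode) (b : ℕ) : RecursiveIn (chi Y) fun n => (evalo (chi Y) c n).map fun _ => b :=
    ((uniformlyRecursiveIn_unit.2 ⟨c, rfl⟩).map (.const b)).recursiveIn ()
  obtain ⟨χ, hχ, hmerge⟩ :=
    RecursiveIn.exists_merge (g := Y.indicator fun _ => 1) (hmap c 1) (hmap c' 0)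
  have hchi (n : ℕ) : χ n = chi Z n := by
    obtain ⟨v, hv⟩ := Part.dom_iff_mem.1 <| (hmerge n).2.2 <| (em (n ∈ Z)).imp (hc n).1 (hc' n).1
    rw [Part.eq_some_iff.2 hv, chi]
    simp only [Part.mem_map_iff] at hmerge
    rcases (hmerge n).1 v hv with ⟨u, hu, rfl⟩ | ⟨u, hu, rfl⟩
    · rw [Set.indicator_of_mem ((hc n).2 (Part.dom_iff_mem.2 ⟨u, hu⟩))]
    · rw [Set.indicator_of_notMem ((hc' n).2 (Part.dom_iff_mem.2 ⟨u, hu⟩))]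
  rwa [TuringLE, ← funext hchi]

theorem not_turingLE_jump (X : Set ℕ) : ¬ TuringLE (jump X) X := by
  intro h
  have hsearch := (uniformlyRecursiveIn_unit.2 h).comp_primrec primrec_unpair_fst
  obtain ⟨e, he⟩ := (hsearch.rfind.recursiveIn ()).exists_phi_eq
  have hdom : (phi (chi X) e e).Dom ↔ e ∉ jump X := by
    rw [he]
    refine Nat.rfind_dom.trans ?_
    by_cases hX : e ∈ jump X <;> simp [chi, hX]
  exact iff_not_self hdom

theorem primrec_four_mul_pair_add {s t : ℕ → ℕ} (hs : Primrec s) (ht : Primrec t) (k : ℕ) :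
    Primrec fun i => 4 * Nat.pair (s i) (t i) + k :=
  Primrec.nat_add.comp (Primrec.nat_mul.comp (.const 4) (Primrec₂.natPair.comp hs ht)) (.const k)

theorem exists_primrec_phi_eq_some (O : ℕ →. ℕ) :
    ∃ κ : ℕ → ℕ, Primrec κ ∧ ∀ i x, phi O (κ i) x = Part.some i := by
  refine ⟨fun i => Nat.rec 0 (fun _ t => 4 * Nat.pair 1 t + 6) i,
    Primrec.nat_rec₁ 0 (Primrec.comp₂ (primrec_four_mul_pair_add (.const 1) .id 6) .right),
    fun i x => ?_⟩
  induction i with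
  | zero =>
    change evalo O (OCode.ofNat 0) x = _
    rw [OCode.ofNat]
    rfl
  | succ i ih =>
    rw [phi] at ih ⊢
    simp only [OCode.ofNat_comp, evalo, ih]
    rw [OCode.ofNat]
    exact Part.bind_some i _

theorem RecursiveIn.exists_primrec_phi_eq_curry {O Θ : ℕ →. ℕ} (hΘ : RecursiveIn O Θ) :
    ∃ t : ℕ → ℕ, Primrec t ∧ ∀ i, phi O (t i) = fun x => Θ (Nat.pair i x) := by
  obtain ⟨e, rfl⟩ := hΘ.exists_phi_eq
  obtain ⟨κ, hκ, hphi⟩ := exists_primrec_phi_eq_some O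
  obtain ⟨d, hd⟩ := RecursiveIn.exists_phi_eq <|
    uniformlyRecursiveIn_unit.1 (.of_primrec (O := fun _ => O) Primrec.id)
  refine ⟨_, primrec_four_mul_pair_add (.const e)
    (primrec_four_mul_pair_add hκ (.const d) 5) 6, fun i => funext fun x => ?_⟩
  simp only [phi] at hphi hd ⊢
  simp only [OCode.ofNat_comp, OCode.ofNat_pair, evalo, hphi, hd]
  simp only [Seq.seq, toPFun_apply, id, Part.map_eq_map, Part.map_some, Part.bind_some]
  exact Part.bind_some _ _

theorem RecursiveIn.exists_primrec_phi_eq_evalo {O Θ : ℕ →. ℕ} (hΘ : RecursiveIn O Θ) (c : OCode) :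
    ∃ t : ℕ → ℕ, Primrec t ∧ ∀ i, phi O (t i) = evalo (fun x => Θ (Nat.pair i x)) c := by
  induction c with
  | zero => exact ⟨fun _ => 0, .const 0, fun i => by rw [phi, OCode.ofNat]; rfl⟩
  | succ => exact ⟨fun _ => 1, .const 1, fun i => by rw [phi, OCode.ofNat]; rfl⟩
  | left => exact ⟨fun _ => 2, .const 2, fun i => by rw [phi, OCode.ofNat]; rfl⟩
  | right => exact ⟨fun _ => 3, .const 3, fun i => by rw [phi, OCode.ofNat]; rfl⟩
  | oracle => exact hΘ.exists_primrec_phi_eq_curry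
  | pair a b iha ihb =>
    obtain ⟨⟨s, hs, hphis⟩, t, ht, hphit⟩ := And.intro iha ihb
    refine ⟨_, primrec_four_mul_pair_add hs ht 5, fun i => ?_⟩
    simp only [phi, evalo, OCode.ofNat_pair] at *
    simp only [hphis, hphit]
    rfl
  | comp a b iha ihb =>
    obtain ⟨⟨s, hs, hphis⟩, t, ht, hphit⟩ := And.intro iha ihb
    refine ⟨_, primrec_four_mul_pair_add hs ht 6, fun i => ?_⟩
    simp only [phi, evalo, OCode.ofNat_comp] at *
    simp only [hphis, hphit]
    rfl
  | prec a b iha ihb =>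
    obtain ⟨⟨s, hs, hphis⟩, t, ht, hphit⟩ := And.intro iha ihb
    refine ⟨_, primrec_four_mul_pair_add hs ht 7, fun i => ?_⟩
    simp only [phi, evalo, OCode.ofNat_prec] at *
    simp only [hphis, hphit]
    rfl
  | rfind' a iha =>
    obtain ⟨s, hs, hphis⟩ := iha
    refine ⟨_, primrec_four_mul_pair_add hs (.const 0) 8, fun i => ?_⟩
    simp only [phi, evalo, OCode.ofNat_rfind'] at *
    simp only [hphis]
    rfl

section SubApp

variable {α : Type*} {P : α → Prop}

theorem mem_bind_assert_some {x : Part α} {c : Subtype P} :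
    (c ∈ x.bind fun a => Part.assert (P a) fun h => Part.some ⟨a, h⟩) ↔ c.1 ∈ x := by
  simp only [Part.mem_bind_iff, Part.mem_assert_iff, Part.mem_some_iff]
  exact ⟨fun ⟨_, ha, _, hc⟩ => hc ▸ ha, fun hc => ⟨c.1, hc, c.2, rfl⟩⟩

theorem mem_subApp {app : α → α → Part α} {a b c : Subtype P} :
    c ∈ subApp app P a b ↔ c.1 ∈ app a.1 b.1 :=
  mem_bind_assert_some

end SubApp

section KleeneSecondModel

variable {Y : Set ℕ}

theorem mem_partToTotal {ψ : ℕ →. ℕ} {g : ℕ → ℕ} : g ∈ partToTotal ψ ↔ ψ = toPFun g := by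
  constructor
  · rintro ⟨h, rfl⟩
    exact funext fun n => (Part.some_get (h n)).symm
  · rintro rfl
    exact ⟨fun _ => trivial, rfl⟩

theorem mem_k2XApp {a b c : K2el Y} :
    c ∈ k2XApp Y a b ↔ phi (pjoin (toPFun a.1) (toPFun b.1)) (a.1 0) = toPFun c.1 :=
  mem_subApp.trans mem_partToTotal

/-- The numbering of `K2^Y` by the indices of total functions relative to `Y`. -/
noncomputable def k2Numbering (Y : Set ℕ) : ℕ →. K2el Y := fun i =>
  (partToTotal (phi (chi Y) i)).bind fun g =>
    Part.assert (RecursiveIn (chi Y) (toPFun g)) fun h => Part.some ⟨g, h⟩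

theorem mem_k2Numbering {i : ℕ} {a : K2el Y} :
    a ∈ k2Numbering Y i ↔ phi (chi Y) i = toPFun a.1 :=
  mem_bind_assert_some.trans mem_partToTotal

theorem isNumbering_k2Numbering (Y : Set ℕ) : IsNumbering (k2Numbering Y) := fun a =>
  a.2.exists_phi_eq.imp fun _ => mem_k2Numbering.2

theorem recursiveIn_chi_phi (Y : Set ℕ) :
    RecursiveIn (chi Y) fun z => phi (chi Y) z.unpair.1 z.unpair.2 :=
  uniformlyRecursiveIn_phi.recursiveIn (Y.indicator fun _ => 1)

theorem ceInequiv_k2Numbering (Y : Set ℕ) : CEInequiv Y (k2Numbering Y) := by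
  have hl := primrec_unpair_fst
  have hr := primrec_unpair_snd
  have hphi := uniformlyRecursiveIn_unit.2 (recursiveIn_chi_phi Y)
  have hfst := hphi.comp_primrec (Primrec₂.natPair.comp (hl.comp hl) hr)
  have hsnd := hphi.comp_primrec (Primrec₂.natPair.comp (hr.comp hl) hr)
  obtain ⟨c, hc⟩ := ((hfst.pair hsnd).map
    (f := fun w => if w.unpair.1 = w.unpair.2 then 1 else 0)
    (.ite (Primrec.eq.comp hl hr) (.const 1) (.const 0))).rfind.recursiveIn ()
  refine ⟨fun n m => (evalo (chi Y) c (Nat.pair n m)).Dom, ⟨c, fun _ _ => Iff.rfl⟩,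
    fun n m hn hm => ?_⟩
  obtain ⟨⟨a, ha⟩, b, hb⟩ := And.intro (Part.dom_iff_mem.1 hn) (Part.dom_iff_mem.1 hm)
  have hne : k2Numbering Y n ≠ k2Numbering Y m ↔ ∃ k, a.1 k ≠ b.1 k := by
    rw [Part.eq_some_iff.2 ha, Part.eq_some_iff.2 hb, Part.some_injective.ne_iff]
    exact Subtype.coe_injective.ne_iff.symm.trans Function.ne_iff
  rw [hne, hc]
  refine Nat.rfind_dom.trans ?_
  simp [mem_k2Numbering.1 ha, mem_k2Numbering.1 hb, toPFun_apply]

theorem pjoin_toPFun (g h : ℕ → ℕ) :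
    pjoin (toPFun g) (toPFun h) = toPFun fun n => if n % 2 = 0 then g (n / 2) else h (n / 2) :=
  funext fun _ => (apply_ite Part.some _ _ _).symm

theorem recursiveIn_chi_pjoin_phi (Y : Set ℕ) :
    RecursiveIn (chi Y) fun w =>
      pjoin (phi (chi Y) w.unpair.1.unpair.1) (phi (chi Y) w.unpair.1.unpair.2) w.unpair.2 := by
  have hl := primrec_unpair_fst
  have hr := primrec_unpair_snd
  have hphi := uniformlyRecursiveIn_unit.2 (recursiveIn_chi_phi Y)
  have hquery : Primrec fun w : ℕ => Nat.pair
      (if w.unpair.2 % 2 = 0 then w.unpair.1.unpair.1 else w.unpair.1.unpair.2)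
      (w.unpair.2 / 2) :=
    Primrec₂.natPair.comp
      (.ite (Primrec.eq.comp (Primrec.nat_mod.comp hr (.const 2)) (.const 0))
        (hl.comp hl) (hr.comp hl))
      (Primrec.nat_div.comp hr (.const 2))
  refine uniformlyRecursiveIn_unit.1 <| (hphi.comp_primrec hquery).of_eq fun _ w => ?_
  simp only [Nat.unpair_pair, pjoin]
  split_ifs <;> rfl

-- The index `g 0` of the functional in `g · h` is the value of `g ⊕ h` at `0`, so every
-- application is computed from the join by one functional.
theorem effValued_k2Numbering (Y : Set ℕ) : EffValued Y (k2XApp Y) (k2Numbering Y) := by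
  have hhead : UniformlyRecursiveIn toPFun fun g => toPFun fun _ => g 0 :=
    UniformlyRecursiveIn.oracle.comp_primrec (.const 0)
  obtain ⟨c, hc⟩ := uniformlyRecursiveIn_phi.comp (hhead.natPair (.of_primrec Primrec.id))
  simp only [Nat.unpair_pair, id] at hc
  obtain ⟨t, ht, hphi⟩ := (recursiveIn_chi_pjoin_phi Y).exists_primrec_phi_eq_evalo c
  refine ⟨toPFun t, uniformlyRecursiveIn_unit.1 (.of_primrec ht),
    fun n m a b d ha hb hd => ⟨_, Part.mem_some _, mem_k2Numbering.2 ?_⟩⟩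
  rw [mem_k2Numbering] at ha hb
  rw [mem_k2XApp, pjoin_toPFun] at hd
  simp only [hphi, Nat.unpair_pair, ha, hb, pjoin_toPFun, hc]
  exact hd

end KleeneSecondModel

section SequentialModel

variable {X : Set ℕ}

theorem mem_bXApp {a b c : Bel X} :
    c ∈ bXApp X a b ↔ c.1 = fun n => (a.1 0).bind fun e => phi (pjoin a.1 b.1) e n :=
  mem_subApp.trans Part.mem_some_iff

/-- The constant partial function as an element of `B^X`: the numeral of `p` if `p` is a number,
the nowhere defined function if `p` is `Part.none`. -/
def Bel.const (X : Set ℕ) (p : Part ℕ) : Bel X :=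
  ⟨fun _ => p, by
    have hp : Nat.Partrec fun _ => p := by
      induction p using Part.induction_on with
      | hnone => exact Nat.Partrec.none
      | hsome n => exact Nat.Partrec.of_primrec (Nat.Primrec.const n)
    exact uniformlyRecursiveIn_unit.1 (.of_partrec hp)⟩

theorem Bel.const_injective : Function.Injective (Bel.const X) := fun _ _ h =>
  congrFun (congrArg Subtype.val h) 0

theorem Bel.exists_mem_bXApp_iff {Ψ : (ℕ →. ℕ) → ℕ →. ℕ} (hΨ : UniformlyRecursiveIn id Ψ)
    {θ : ℕ →. ℕ} (hθ : RecursiveIn (chi X) θ) : ∃ a : Bel X, (∀ n, a.1 (n + 1) = θ n) ∧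
      ∀ b c : Bel X, c ∈ bXApp X a b ↔ c.1 = Ψ (pjoin a.1 b.1) := by
  obtain ⟨c, hc⟩ := hΨ
  obtain ⟨e, rfl⟩ := OCode.ofNat_surjective c
  have htail := (uniformlyRecursiveIn_unit.2 hθ).comp_primrec Primrec.pred
  have hcons := htail.ite_total (p := (· ≠ 0)) (Primrec.eq.comp .id (.const 0)).not
    (UniformlyRecursiveIn.of_primrec (.const e))
  refine ⟨⟨_, hcons.recursiveIn ()⟩, fun n => by simp, fun b c => mem_bXApp.trans ?_⟩
  simp [← hc, phi]

-- The join `a ⊕ b` has `b 0` at position `1` and `a (r + 1)`, that is `θ r`, at `2 * (r + 1)`.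
theorem Bel.exists_const_mem_bXApp {θ : ℕ →. ℕ} (hθ : RecursiveIn (chi X) θ) :
    ∃ a, ∀ n, Bel.const X (θ n) ∈ bXApp X a (.const X (Part.some n)) := by
  have hΨ : UniformlyRecursiveIn id fun (O : ℕ →. ℕ) (_ : ℕ) =>
      (O 1).bind fun r => O (2 * (r + 1)) :=
    (UniformlyRecursiveIn.oracle.comp_primrec
      (Primrec.nat_mul.comp (.const 2) .succ)).bind (.comp_primrec .oracle (.const 1))
  obtain ⟨a, ha, happ⟩ := exists_mem_bXApp_iff hΨ hθ
  refine ⟨a, fun n => (happ _ _).2 <| funext fun _ => ?_⟩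
  simp [pjoin, Bel.const, ha]

theorem Bel.exists_mem_bXApp_const (θ : Bel X) :
    ∃ a, Bel.const X Part.none ∈ bXApp X a (.const X Part.none) ∧
      ∀ n, θ ∈ bXApp X a (.const X (Part.some n)) := by
  have hΨ : UniformlyRecursiveIn id fun (O : ℕ →. ℕ) (n : ℕ) =>
      (O 1).bind fun _ => O (2 * (n + 1)) := by
    have htail : UniformlyRecursiveIn id fun (O : ℕ →. ℕ) w => O (2 * (w.unpair.2 + 1)) :=
      UniformlyRecursiveIn.oracle.comp_primrec
        (Primrec.nat_mul.comp (.const 2) (Primrec.succ.comp primrec_unpair_snd))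
    have hhead : UniformlyRecursiveIn id fun (O : ℕ →. ℕ) (_ : ℕ) => O 1 :=
      UniformlyRecursiveIn.oracle.comp_primrec (.const 1)
    refine (htail.bind (hhead.pair (.of_primrec Primrec.id))).of_eq fun O n => ?_
    simp [toPFun_apply, Part.bind_assoc]
  obtain ⟨a, ha, happ⟩ := exists_mem_bXApp_iff hΨ θ.2
  refine ⟨a, (happ _ _).2 (funext fun _ => ?_), fun n => (happ _ _).2 (funext fun _ => ?_)⟩ <;>
    simp [pjoin, Bel.const, ha]

theorem recursiveIn_chi_halting (X : Set ℕ) :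
    RecursiveIn (chi X) fun n => (phi (chi X) n n).map fun _ => 0 := by
  have hphi := uniformlyRecursiveIn_unit.2 (recursiveIn_chi_phi X)
  simpa only [Nat.unpair_pair, id] using
    ((hphi.comp_primrec (Primrec₂.natPair.comp .id .id)).map (.const 0)).recursiveIn ()

end SequentialModel

section Numbering

variable {α : Type*} {app : α → α → Part α} {γ : ℕ →. α} {Y : Set ℕ}

theorem RecursiveIn.exists_computableIn {ψ : ℕ →. ℕ} (hψ : RecursiveIn (chi Y) ψ)
    {P : ℕ → ℕ → Prop} (h : ∀ n, ∃ v ∈ ψ n, P n v) : ∃ d, ComputableIn Y d ∧ ∀ n, P n (d n) := by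
  choose d hd hP using h
  have hdψ : ψ = toPFun d := funext fun n => Part.eq_some_iff.2 (hd n)
  subst hdψ
  exact ⟨d, hψ, hP⟩

theorem EffValued.exists_computableIn_of_mem_app (happ : EffValued Y app γ) (hγ : IsNumbering γ)
    {a : α} {b c : ℕ → α} {d : ℕ → ℕ} (hd : ComputableIn Y d) (hb : ∀ n, b n ∈ γ (d n))
    (hc : ∀ n, c n ∈ app a (b n)) : ∃ d', ComputableIn Y d' ∧ ∀ n, c n ∈ γ (d' n) := by
  obtain ⟨⟨ψ, hψ, hψapp⟩, i, hi⟩ := And.intro happ (hγ a)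
  have hsearch := (uniformlyRecursiveIn_unit.2 hψ).comp
    ((UniformlyRecursiveIn.of_primrec (.const i)).natPair
      (uniformlyRecursiveIn_unit.2 hd))
  exact (hsearch.recursiveIn ()).exists_computableIn fun n =>
    hψapp _ _ _ _ _ hi (hb n) (hc n)

theorem EffValued.exists_computableIn_of_succ_mem_app (happ : EffValued Y app γ)
    (hγ : IsNumbering γ) {a : α} {b : ℕ → α} (hb : ∀ n, b (n + 1) ∈ app a (b n)) :
    ∃ d, ComputableIn Y d ∧ ∀ n, b n ∈ γ (d n) := by
  obtain ⟨⟨ψ, hψ, hψapp⟩, ⟨i, hi⟩, j, hj⟩ := And.intro happ (And.intro (hγ a) (hγ (b 0)))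
  have hiter := ((uniformlyRecursiveIn_unit.2 hψ).comp_primrec
    (Primrec₂.natPair.comp (.const i) primrec_unpair_snd)).natRec j
  refine (hiter.recursiveIn ()).exists_computableIn (P := (b · ∈ γ ·)) fun n => ?_
  induction n with
  | zero => exact ⟨j, Part.mem_some j, hj⟩
  | succ n ih =>
    obtain ⟨v, hv, hbv⟩ := ih
    obtain ⟨w, hw, hbw⟩ := hψapp _ _ _ _ _ hi hbv (hb n)
    exact ⟨w, Part.mem_bind hv (by simpa only [Nat.unpair_pair] using hw), hbw⟩

theorem CEIn.ce1In {R : ℕ → ℕ → Prop} (hR : CEIn Y R) {d : ℕ → ℕ} (hd : ComputableIn Y d)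
    (i : ℕ) : CE1In Y {n | R (d n) i} := by
  obtain ⟨c, hc⟩ := hR
  have hcomp := (uniformlyRecursiveIn_unit.2 ⟨c, rfl⟩).comp
    ((uniformlyRecursiveIn_unit.2 hd).natPair (.of_primrec (.const i)))
  obtain ⟨c', hc'⟩ := hcomp.recursiveIn ()
  exact ⟨c', fun n => by rw [hc']; exact hc _ _⟩

theorem TuringLE.of_isDecider {Z : Set ℕ} {d : ℕ → ℕ} {abot atop : α} (hγ : IsNumbering γ)
    (hineq : CEInequiv Y γ) (hne : abot ≠ atop) (hd : ComputableIn Y d)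
    (hdec : IsDecider γ abot atop Z d) : TuringLE Z Y := by
  obtain ⟨⟨R, hR, hRγ⟩, ⟨i, hi⟩, j, hj⟩ := And.intro hineq (And.intro (hγ abot) (hγ atop))
  have hsep (n : ℕ) : (R (d n) i ↔ n ∈ Z) ∧ (R (d n) j ↔ n ∈ Zᶜ) := by
    obtain ⟨hbot, htop⟩ := hdec n
    have hdom : (γ (d n)).Dom := by
      by_cases hn : n ∈ Z
      · exact htop hn ▸ trivial
      · exact hbot hn ▸ trivial
    rw [hRγ _ _ hdom (Part.dom_iff_mem.2 ⟨_, hi⟩), hRγ _ _ hdom (Part.dom_iff_mem.2 ⟨_, hj⟩),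
      Part.eq_some_iff.2 hi, Part.eq_some_iff.2 hj]
    by_cases hn : n ∈ Z <;> simp [hn, hbot, htop, hne, hne.symm]
  have hce (k : ℕ) : CE1In Y {n | R (d n) k} := hR.ce1In hd k
  exact .of_ce1In ((Set.ext fun n => (hsep n).1 : {n | R (d n) i} = Z) ▸ hce i)
    ((Set.ext fun n => (hsep n).2 : {n | R (d n) j} = Zᶜ) ▸ hce j)

end Numbering

section Homomorphism

variable {α : Type*} {app : α → α → Part α} {γ : ℕ →. α} {X Y : Set ℕ} {f : Bel X → α}

theorem map_const_none_ne_map_const_some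
    (hf : ∀ a a' c, c ∈ bXApp X a a' → f c ∈ app (f a) (f a')) (hne : ∃ a b, f a ≠ f b) (n : ℕ) :
    f (.const X Part.none) ≠ f (.const X (Part.some n)) := by
  intro h
  have hconst (θ : Bel X) : f θ = f (.const X Part.none) := by
    obtain ⟨a, hnone, hsome⟩ := θ.exists_mem_bXApp_const
    exact Part.mem_unique (h ▸ hf _ _ _ (hsome n)) (hf _ _ _ hnone)
  obtain ⟨a, b, hab⟩ := hne
  exact hab ((hconst a).trans (hconst b).symm)

theorem exists_isDecider_jump (hγ : IsNumbering γ) (happ : EffValued Y app γ)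
    (hf : ∀ a a' c, c ∈ bXApp X a a' → f c ∈ app (f a) (f a')) :
    ∃ d, ComputableIn Y d ∧
      IsDecider γ (f (.const X Part.none)) (f (.const X (Part.some 0))) (jump X) d := by
  obtain ⟨S, hS⟩ := Bel.exists_const_mem_bXApp (X := X) <|
    uniformlyRecursiveIn_unit.1 (.of_primrec Primrec.succ)
  obtain ⟨H, hH⟩ := Bel.exists_const_mem_bXApp (recursiveIn_chi_halting X)
  obtain ⟨d, hd, hnumeral⟩ := happ.exists_computableIn_of_succ_mem_app hγ
    (b := fun n => f (.const X (Part.some n))) fun n => hf _ _ _ (hS n)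
  obtain ⟨d', hd', hhalt⟩ := happ.exists_computableIn_of_mem_app hγ hd hnumeral
    fun n => hf _ _ _ (hH n)
  refine ⟨d', hd', fun n => ⟨fun hn => ?_, fun hn => ?_⟩⟩ <;>
    rw [Part.eq_some_iff.2 (hhalt n)]
  · rw [Part.eq_none_iff'.2 hn, Part.map_none]
  · obtain ⟨v, hv⟩ := Part.dom_iff_mem.1 hn
    rw [Part.eq_some_iff.2 hv, Part.map_some]

end Homomorphism

theorem stmt14_general {α : Type*} {app : α → α → Part α} {γ : ℕ →. α} {X Y : Set ℕ}
    (hγ : IsNumbering γ) (happ : EffValued Y app γ) (hineq : CEInequiv Y γ) {f : Bel X → α}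
    (hf : ∀ a a' c, c ∈ bXApp X a a' → f c ∈ app (f a) (f a')) (hne : ∃ a b, f a ≠ f b) :
    TuringLE (jump X) Y := by
  obtain ⟨d, hd, hdec⟩ := exists_isDecider_jump hγ happ hf
  exact .of_isDecider hγ hineq (map_const_none_ne_map_const_some hf hne 0) hd hdec

theorem turingLE_jump_of_isPCAEmbedding {X Y : Set ℕ} {f : Bel X → K2el Y}
    (hf : IsPCAEmbedding (bXApp X) (k2XApp Y) f) : TuringLE (jump X) Y :=
  stmt14_general (isNumbering_k2Numbering Y) (effValued_k2Numbering Y) (ceInequiv_k2Numbering Y)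
    hf.2 ⟨_, _, hf.1.ne (Bel.const_injective.ne (Part.some_ne_none 0))⟩

theorem stmt14 :
    (∀ X Y : Set ℕ,
      (∃ f : Bel X → K2el Y, IsPCAEmbedding (bXApp X) (k2XApp Y) f) →
        TuringLE (jump X) Y) ∧
    (∀ X : Set ℕ, ¬ ∃ f : Bel X → K2el X, IsPCAEmbedding (bXApp X) (k2XApp X) f) :=
  ⟨fun _ _ ⟨_, hf⟩ => turingLE_jump_of_isPCAEmbedding hf,
    fun X ⟨_, hf⟩ => not_turingLE_jump X (turingLE_jump_of_isPCAEmbedding hf)⟩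

end PCAEmb
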